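/- arXiv:1304.2328 — 2 statements merged into one kernel-verified Lean document; each statement's English description precedes it below -/
import Mathlib

section
/- Fix 1 ≤ k ≤ min(2m,n). For every Hermitian X ∈ M_m ⊗ M_n, r_k^⊗(X) = inf{ s ∈ ℝ : the block operator [[s·I_m⊗I_n, X],[X†, s·I_m⊗I_n]] ∈ M_{2m} ⊗ M_n is k-block positive }, where the 2×2 block matrix is regarded as an element of M₂ ⊗ M_m ⊗ M_n ≅ M_{2m} ⊗ M_n and k-block positivity is taken with respect to the bipartition ℂ^{2m} ⊗ ℂ^n. -/
open scoped Kronecker ComplexOrder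
open Matrix

namespace Ent

variable {ι κ : Type*} [Fintype ι] [Fintype κ]

/-- Inner product ⟨v,w⟩ = Σᵢ conj(v i) * (w i) (conjugate-linear in the first argument). -/
noncomputable def vinner (v w : ι → ℂ) : ℂ := dotProduct (star v) w

/-- An elementary (product) tensor a ⊗ b in ℂ^ι ⊗ ℂ^κ. -/
def prodVec (a : ι → ℂ) (b : κ → ℂ) : ι × κ → ℂ := fun p => a p.1 * b p.2

/-- `v` has Schmidt rank at most `k`. -/
def SchmidtRankLE (k : ℕ) (v : ι × κ → ℂ) : Prop :=
  ∃ (a : Fin k → ι → ℂ) (b : Fin k → κ → ℂ), v = ∑ i, prodVec (a i) (b i)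

/-- The rank-one operator |v⟩⟨w|. -/
noncomputable def ketBra (v : ι → ℂ) (w : κ → ℂ) : Matrix ι κ ℂ :=
  Matrix.vecMulVec v (star w)

/-- A finite family of vectors is orthonormal. -/
def Orthonormal' {N : Type*} [DecidableEq N] (v : N → ι → ℂ) : Prop :=
  ∀ i j, vinner (v i) (v j) = if i = j then 1 else 0

/-- The S(k)-norm of `X ∈ M_ι ⊗ M_κ`. -/
noncomputable def SkNorm (k : ℕ) (X : Matrix (ι × κ) (ι × κ) ℂ) : ℝ :=
  sSup { r | ∃ v w : ι × κ → ℂ, vinner v v = 1 ∧ vinner w w = 1 ∧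
    SchmidtRankLE k v ∧ SchmidtRankLE k w ∧
    r = ‖vinner v (X.mulVec w)‖ }

/-- The product numerical radius r_k^⊗. -/
noncomputable def prodRad (k : ℕ) (Y : Matrix (ι × κ) (ι × κ) ℂ) : ℝ :=
  sSup { r | ∃ v : ι × κ → ℂ, vinner v v = 1 ∧ SchmidtRankLE k v ∧
    r = ‖vinner v (Y.mulVec v)‖ }

/-- The norm ‖·‖_{γ,k}. -/
noncomputable def gammaNorm (k : ℕ) (X : Matrix (ι × κ) (ι × κ) ℂ) : ℝ :=
  sInf { r | ∃ (N : ℕ) (c : Fin N → ℂ) (v w : Fin N → (ι × κ → ℂ)),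
    (∀ i, vinner (v i) (v i) = 1 ∧ vinner (w i) (w i) = 1 ∧
      SchmidtRankLE k (v i) ∧ SchmidtRankLE k (w i)) ∧
    X = ∑ i, c i • ketBra (v i) (w i) ∧
    r = ∑ i, ‖c i‖ }

/-- `ρ` is a density matrix. -/
def IsDensity (ρ : Matrix ι ι ℂ) : Prop := ρ.PosSemidef ∧ ρ.trace = 1

/-- `ρ` has Schmidt number at most `k`: it is a convex combination of projections onto
unit vectors of Schmidt rank at most `k`. -/
def SchmidtNumLE (k : ℕ) (ρ : Matrix (ι × κ) (ι × κ) ℂ) : Prop :=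
  ∃ (N : ℕ) (p : Fin N → ℝ) (v : Fin N → (ι × κ → ℂ)),
    (∀ i, 0 ≤ p i ∧ vinner (v i) (v i) = 1 ∧ SchmidtRankLE k (v i)) ∧
    (∑ i, p i) = 1 ∧ ρ = ∑ i, p i • ketBra (v i) (v i)

/-- The robustness norm R_k on Hermitian operators. -/
noncomputable def Rk (k : ℕ) (Y : Matrix (ι × κ) (ι × κ) ℂ) : ℝ :=
  sInf { r | ∃ (c₁ c₂ : ℝ) (ρ₁ ρ₂ : Matrix (ι × κ) (ι × κ) ℂ),
    0 ≤ c₁ ∧ 0 ≤ c₂ ∧ IsDensity ρ₁ ∧ IsDensity ρ₂ ∧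
    SchmidtNumLE k ρ₁ ∧ SchmidtNumLE k ρ₂ ∧
    Y = c₁ • ρ₁ - c₂ • ρ₂ ∧ r = c₁ + c₂ }

/-- `Y` is k-block positive: ⟨v|Y|v⟩ ≥ 0 for every unit vector of Schmidt rank at most `k`. -/
def KBlockPos (k : ℕ) (Y : Matrix (ι × κ) (ι × κ) ℂ) : Prop :=
  ∀ v : ι × κ → ℂ, vinner v v = 1 → SchmidtRankLE k v →
    0 ≤ (vinner v (Y.mulVec v)).re

/-- Dual of a norm on matrices, w.r.t. the Hilbert–Schmidt inner product ⟨W,X⟩ = Tr(Wᴴ X). -/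
noncomputable def dualNormM (f : Matrix ι κ ℂ → ℝ) (X : Matrix ι κ ℂ) : ℝ :=
  sSup { r | ∃ W : Matrix ι κ ℂ, f W ≤ 1 ∧ r = ‖(Wᴴ * X).trace‖ }

/-- Dual of a norm, computed in the real Hilbert space of Hermitian matrices with the
Hilbert–Schmidt inner product ⟨W,Y⟩ = Tr(WY). -/
noncomputable def dualNormHerm (f : Matrix ι ι ℂ → ℝ) (Y : Matrix ι ι ℂ) : ℝ :=
  sSup { r | ∃ W : Matrix ι ι ℂ, W.IsHermitian ∧ f W ≤ 1 ∧ r = |((W * Y).trace).re| }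

/-- The Frobenius norm of a matrix. -/
noncomputable def frobNorm (X : Matrix ι κ ℂ) : ℝ :=
  Real.sqrt (∑ i, ∑ j, Complex.normSq (X i j))

/-- The (k,2)-norm: ‖X‖_{(k,2)} = sup { |Tr(XY)| : rank Y ≤ k, ‖Y‖_F ≤ 1 }. -/
noncomputable def kNorm (k : ℕ) (X : Matrix ι κ ℂ) : ℝ :=
  sSup { r | ∃ Y : Matrix κ ι ℂ, Y.rank ≤ k ∧ frobNorm Y ≤ 1 ∧
    r = ‖(X * Y).trace‖ }

/-- The trace norm: the sum of the singular values, i.e. of the square roots of the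
eigenvalues of Xᴴ X. -/
noncomputable def traceNorm [DecidableEq κ] (X : Matrix ι κ ℂ) : ℝ :=
  ∑ i, Real.sqrt ((Matrix.isHermitian_conjTranspose_mul_self X).eigenvalues i)

/-- The s(k) vector norm: sup of |⟨u,w⟩| over unit vectors u of Schmidt rank at most k. -/
noncomputable def skVecNorm (k : ℕ) (w : ι × κ → ℂ) : ℝ :=
  sSup { r | ∃ u : ι × κ → ℂ, vinner u u = 1 ∧ SchmidtRankLE k u ∧
    r = ‖vinner u w‖ }

/-- Dual of a norm on vectors. -/
noncomputable def dualNormV (f : (ι × κ → ℂ) → ℝ) (v : ι × κ → ℂ) : ℝ :=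
  sSup { r | ∃ w : ι × κ → ℂ, f w ≤ 1 ∧ r = ‖vinner w v‖ }

/-- The realignment map, L(X)_{(i,k),(j,l)} = X_{(i,j),(k,l)}. -/
def realign {m n : ℕ} (X : Matrix (Fin m × Fin n) (Fin m × Fin n) ℂ) :
    Matrix (Fin m × Fin m) (Fin n × Fin n) ℂ :=
  fun p q => X (p.1, q.1) (p.2, q.2)

/-- The projective tensor norm on M_{m,n} ⊗ M_{m,n}. -/
noncomputable def projNorm {m n : ℕ} (Z : Matrix (Fin m × Fin m) (Fin n × Fin n) ℂ) : ℝ :=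
  sInf { r | ∃ (N : ℕ) (A B : Fin N → Matrix (Fin m) (Fin n) ℂ),
    Z = ∑ i, A i ⊗ₖ B i ∧ r = ∑ i, traceNorm (A i) * traceNorm (B i) }


/-- The block operator [[s·I, X],[Xᴴ, s·I]] ∈ M₂ ⊗ M_m ⊗ M_n ≅ M_{2m} ⊗ M_n. -/
noncomputable def blockOp {m n : ℕ} (s : ℝ) (X : Matrix (Fin m × Fin n) (Fin m × Fin n) ℂ) :
    Matrix ((Fin 2 × Fin m) × Fin n) ((Fin 2 × Fin m) × Fin n) ℂ :=
  fun p q =>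
    if p.1.1 = q.1.1 then (if (p.1.2, p.2) = (q.1.2, q.2) then (s : ℂ) else 0)
    else if p.1.1 = 0 then X (p.1.2, p.2) (q.1.2, q.2)
    else Xᴴ (p.1.2, p.2) (q.1.2, q.2)

/-!
Write a vector of `ℂ² ⊗ ℂᵐ ⊗ ℂⁿ` as `v = (x, y)`. For Hermitian `X`, polarization gives
`⟨v|[[s, X], [Xᴴ, s]]|v⟩ = s ‖v‖² + (⟨x + y|X|x + y⟩ - ⟨x - y|X|x - y⟩) / 2`, and `x ± y` arise
from `v` by operators acting on `ℂ^{2m}` alone, which cannot raise the Schmidt rank. With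
`r = r_k^⊗(X)`, the parallelogram law bounds this below by `(s - r) ‖v‖²`, so `s = r` already gives
a `k`-block positive operator. Conversely, testing `k`-block positivity on `(v, ±v)` gives
`|⟨v|X|v⟩| ≤ s` for every unit vector `v` of Schmidt rank at most `k`.
-/

section Inner

variable (v x y : ι → ℂ) (X : Matrix ι ι ℂ)

lemma vinner_eq_inner : vinner x y = inner ℂ (WithLp.toLp 2 x) (WithLp.toLp 2 y) := by
  rw [EuclideanSpace.inner_toLp_toLp, dotProduct_comm, vinner]

lemma vinner_self : vinner v v = ((‖WithLp.toLp 2 v‖ ^ 2 : ℝ) : ℂ) := by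
  rw [vinner_eq_inner, inner_self_eq_norm_sq_to_K]
  norm_cast

lemma vinner_smul_mulVec_smul (c : ℂ) :
    vinner (c • v) (X *ᵥ (c • v)) = ((‖c‖ ^ 2 : ℝ) : ℂ) * vinner v (X *ᵥ v) := by
  simp only [vinner, mulVec_smul, star_smul, smul_dotProduct, dotProduct_smul, smul_eq_mul,
    ← mul_assoc, Complex.star_def, Complex.mul_conj', Complex.ofReal_pow]

lemma vinner_smul_smul (c : ℂ) :
    vinner (c • v) (c • v) = ((‖c‖ ^ 2 : ℝ) : ℂ) * vinner v v := by
  classical simpa only [one_mulVec] using vinner_smul_mulVec_smul v 1 c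

lemma vinner_parallelogram :
    vinner (x + y) (x + y) + vinner (x - y) (x - y) = 2 * (vinner x x + vinner y y) := by
  simp only [vinner, star_add, star_sub, add_dotProduct, sub_dotProduct, dotProduct_add,
    dotProduct_sub]
  ring

lemma star_vinner_mulVec : star (vinner x (X *ᵥ y)) = vinner y (Xᴴ *ᵥ x) := by
  rw [vinner, vinner, star_dotProduct, star_star, star_mulVec, dotProduct_mulVec]

lemma re_vinner_conjTranspose_mulVec :
    (vinner y (Xᴴ *ᵥ x)).re = (vinner x (X *ᵥ y)).re := by
  rw [← star_vinner_mulVec, Complex.star_def, Complex.conj_re]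

variable {X}

lemma norm_vinner_mulVec_self (hX : X.IsHermitian) :
    ‖vinner v (X *ᵥ v)‖ = |(vinner v (X *ᵥ v)).re| :=
  (Complex.abs_re_eq_norm.2 (hX.im_star_dotProduct_mulVec_self v)).symm

lemma four_mul_re_vinner_mulVec (hX : X.IsHermitian) :
    4 * (vinner x (X *ᵥ y)).re =
      (vinner (x + y) (X *ᵥ (x + y))).re - (vinner (x - y) (X *ᵥ (x - y))).re := by
  have hsymm := re_vinner_conjTranspose_mulVec x y X
  rw [hX.eq] at hsymm
  simp only [vinner, mulVec_add, mulVec_sub, star_add, star_sub, add_dotProduct, sub_dotProduct,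
    dotProduct_add, dotProduct_sub, Complex.add_re, Complex.sub_re] at hsymm ⊢
  linarith

open scoped Matrix.Norms.L2Operator in
lemma norm_vinner_mulVec_le_l2_opNorm [DecidableEq ι] (hv : vinner v v = 1) :
    ‖vinner v (X *ᵥ v)‖ ≤ ‖X‖ := by
  have hnorm : ‖WithLp.toLp 2 v‖ = 1 := by
    rw [vinner_self, Complex.ofReal_eq_one] at hv
    exact (pow_eq_one_iff_of_nonneg (norm_nonneg _) two_ne_zero).1 hv
  calc ‖vinner v (X *ᵥ v)‖
      ≤ ‖WithLp.toLp 2 v‖ * ‖WithLp.toLp 2 (X *ᵥ v)‖ := by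
        rw [vinner_eq_inner]
        exact norm_inner_le_norm _ _
    _ ≤ ‖WithLp.toLp 2 v‖ * (‖X‖ * ‖WithLp.toLp 2 v‖) := by
        gcongr
        exact X.l2_opNorm_mulVec (WithLp.toLp 2 v)
    _ = ‖X‖ := by rw [hnorm, one_mul, mul_one]

end Inner

section SchmidtRank

variable {α β : Type*} {k : ℕ} {v : α × β → ℂ}

-- The vector in the conclusion is `(L ⊗ 1) v`.
lemma SchmidtRankLE.map_left {α' : Type*} (hv : SchmidtRankLE k v)
    (L : (α → ℂ) →ₗ[ℂ] (α' → ℂ)) :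
    SchmidtRankLE k fun p : α' × β => L (fun i => v (i, p.2)) p.1 := by
  obtain ⟨a, b, rfl⟩ := hv
  refine ⟨fun j => L (a j), b, ?_⟩
  ext ⟨i', l⟩
  have hslice : (fun i => (∑ j, prodVec (a j) (b j)) (i, l)) = ∑ j, b j l • a j := by
    ext i
    simp [prodVec, mul_comm]
  change L (fun i => (∑ j, prodVec (a j) (b j)) (i, l)) i' = _
  rw [hslice]
  simp [prodVec, mul_comm]

lemma SchmidtRankLE.smul (hv : SchmidtRankLE k v) (c : ℂ) : SchmidtRankLE k (c • v) :=
  hv.map_left (c • LinearMap.id)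

lemma schmidtRankLE_prodVec (hk : 1 ≤ k) (a : α → ℂ) (b : β → ℂ) :
    SchmidtRankLE k (prodVec a b) := by
  refine ⟨Pi.single ⟨0, hk⟩ a, fun _ => b, ?_⟩
  ext p
  simp [prodVec, Pi.single_apply, ite_apply]

end SchmidtRank

section UnitVector

variable {k : ℕ} {v : ι × κ → ℂ}

lemma SchmidtRankLE.exists_unit_smul_eq (hv : SchmidtRankLE k v) (hv0 : v ≠ 0) :
    ∃ (c : ℂ) (u : ι × κ → ℂ), vinner u u = 1 ∧ SchmidtRankLE k u ∧ v = c • u := by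
  have hnorm : ‖WithLp.toLp 2 v‖ ≠ 0 := by simpa using hv0
  refine ⟨‖WithLp.toLp 2 v‖, (‖WithLp.toLp 2 v‖ : ℂ)⁻¹ • v, ?_, hv.smul _, ?_⟩
  · rw [vinner_smul_smul, vinner_self, ← Complex.ofReal_mul, norm_inv, Complex.norm_real,
      norm_norm, inv_pow, inv_mul_cancel₀ (pow_ne_zero 2 hnorm), Complex.ofReal_one]
  · rw [smul_inv_smul₀ (Complex.ofReal_ne_zero.2 hnorm)]

lemma exists_unit_schmidtRankLE [Nonempty ι] [Nonempty κ] (hk : 1 ≤ k) :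
    ∃ u : ι × κ → ℂ, vinner u u = 1 ∧ SchmidtRankLE k u := by
  have hone : prodVec (1 : ι → ℂ) (1 : κ → ℂ) ≠ 0 := fun h => by
    simpa [prodVec] using congrFun h (Classical.arbitrary _)
  obtain ⟨-, u, hu, hrank, -⟩ := (schmidtRankLE_prodVec hk 1 1).exists_unit_smul_eq hone
  exact ⟨u, hu, hrank⟩

end UnitVector

section ProdRad

variable {k : ℕ} {X : Matrix (ι × κ) (ι × κ) ℂ} {v : ι × κ → ℂ}

lemma KBlockPos.re_vinner_mulVec_nonneg (hX : KBlockPos k X) (hv : SchmidtRankLE k v) :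
    0 ≤ (vinner v (X *ᵥ v)).re := by
  rcases eq_or_ne v 0 with rfl | hv0
  · simp [vinner]
  obtain ⟨c, u, hu, hrank, rfl⟩ := hv.exists_unit_smul_eq hv0
  rw [vinner_smul_mulVec_smul, Complex.re_ofReal_mul]
  exact mul_nonneg (sq_nonneg _) (hX u hu hrank)

open scoped Matrix.Norms.L2Operator in
lemma norm_vinner_mulVec_le_prodRad (hv : vinner v v = 1) (hrank : SchmidtRankLE k v) :
    ‖vinner v (X *ᵥ v)‖ ≤ prodRad k X := by
  classical
  refine le_csSup ⟨‖X‖, ?_⟩ ⟨v, hv, hrank, rfl⟩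
  rintro _ ⟨u, hu, -, rfl⟩
  exact norm_vinner_mulVec_le_l2_opNorm u hu

lemma SchmidtRankLE.norm_vinner_mulVec_le_prodRad_mul (hv : SchmidtRankLE k v) :
    ‖vinner v (X *ᵥ v)‖ ≤ prodRad k X * (vinner v v).re := by
  rcases eq_or_ne v 0 with rfl | hv0
  · simp [vinner]
  obtain ⟨c, u, hu, hrank, rfl⟩ := hv.exists_unit_smul_eq hv0
  rw [vinner_smul_mulVec_smul, vinner_smul_smul, hu, mul_one, Complex.ofReal_re, norm_mul,
    Complex.norm_real, Real.norm_of_nonneg (sq_nonneg _), mul_comm]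
  exact mul_le_mul_of_nonneg_right (norm_vinner_mulVec_le_prodRad hu hrank) (sq_nonneg _)

lemma two_mul_abs_re_vinner_mulVec_le {x y : ι × κ → ℂ} (hX : X.IsHermitian)
    (hadd : SchmidtRankLE k (x + y)) (hsub : SchmidtRankLE k (x - y)) :
    2 * |(vinner x (X *ᵥ y)).re| ≤ prodRad k X * ((vinner x x).re + (vinner y y).re) := by
  have hbound {z : ι × κ → ℂ} (hz : SchmidtRankLE k z) :
      |(vinner z (X *ᵥ z)).re| ≤ prodRad k X * (vinner z z).re :=
    norm_vinner_mulVec_self z hX ▸ hz.norm_vinner_mulVec_le_prodRad_mul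
  have hparallelogram : (vinner (x + y) (x + y)).re + (vinner (x - y) (x - y)).re =
      2 * ((vinner x x).re + (vinner y y).re) := by
    simpa using congrArg Complex.re (vinner_parallelogram x y)
  have hpolar : 4 * |(vinner x (X *ᵥ y)).re| ≤
      2 * (prodRad k X * ((vinner x x).re + (vinner y y).re)) :=
    calc 4 * |(vinner x (X *ᵥ y)).re|
        = |(vinner (x + y) (X *ᵥ (x + y))).re - (vinner (x - y) (X *ᵥ (x - y))).re| := by
          rw [← four_mul_re_vinner_mulVec x y hX, abs_mul, abs_of_pos (four_pos (α := ℝ))]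
      _ ≤ prodRad k X * (vinner (x + y) (x + y)).re + prodRad k X * (vinner (x - y) (x - y)).re :=
          (abs_sub _ _).trans (add_le_add (hbound hadd) (hbound hsub))
      _ = 2 * (prodRad k X * ((vinner x x).re + (vinner y y).re)) := by
          rw [← mul_add, hparallelogram, mul_left_comm]
  linarith

lemma prodRad_le [Nonempty ι] [Nonempty κ] (hk : 1 ≤ k) {s : ℝ}
    (h : ∀ v, vinner v v = 1 → SchmidtRankLE k v → ‖vinner v (X *ᵥ v)‖ ≤ s) :
    prodRad k X ≤ s := by
  obtain ⟨u, hu, hrank⟩ := exists_unit_schmidtRankLE (ι := ι) (κ := κ) hk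
  refine csSup_le ⟨_, u, hu, hrank, rfl⟩ ?_
  rintro _ ⟨v, hv, hvrank, rfl⟩
  exact h v hv hvrank

end ProdRad

section Ancilla

variable {τ α β : Type*}

/-- The block `(⟨t| ⊗ 1 ⊗ 1) v` of a vector `v` of `ℂ^τ ⊗ ℂ^α ⊗ ℂ^β`, with `ℂ^τ` grouped with `ℂ^α`
as in `blockOp`. -/
def blockComponent (t : τ) (v : (τ × α) × β → ℂ) : α × β → ℂ := fun p => v ((t, p.1), p.2)

/-- The vector `e ⊗ v` of `ℂ^τ ⊗ ℂ^α ⊗ ℂ^β`, with `ℂ^τ` grouped with `ℂ^α` as in `blockOp`; the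
block vectors `(v, ±v)` are `ancillaTensor ![1, ±1] v`. -/
def ancillaTensor (e : τ → ℂ) (v : α × β → ℂ) : (τ × α) × β → ℂ :=
  fun p => e p.1.1 * v (p.1.2, p.2)

lemma blockComponent_ancillaTensor (e : τ → ℂ) (v : α × β → ℂ) (t : τ) :
    blockComponent t (ancillaTensor e v) = e t • v := rfl

lemma vinner_eq_sum_blockComponent [Fintype τ] (v w : (τ × ι) × κ → ℂ) :
    vinner v w = ∑ t, vinner (blockComponent t v) (blockComponent t w) := by
  simp only [vinner, dotProduct, blockComponent, Pi.star_apply, Fintype.sum_prod_type]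

lemma SchmidtRankLE.blockComponent_add_smul {k : ℕ} {v : (τ × α) × β → ℂ}
    (hv : SchmidtRankLE k v) (t t' : τ) (c : ℂ) :
    SchmidtRankLE k (blockComponent t v + c • blockComponent t' v) :=
  hv.map_left (LinearMap.funLeft ℂ ℂ (Prod.mk t) + c • LinearMap.funLeft ℂ ℂ (Prod.mk t'))

lemma SchmidtRankLE.ancillaTensor {k : ℕ} {v : α × β → ℂ} (hv : SchmidtRankLE k v) (e : τ → ℂ) :
    SchmidtRankLE k (ancillaTensor e v) :=
  hv.map_left (LinearMap.mulLeft ℂ (e ∘ Prod.fst) ∘ₗ LinearMap.funLeft ℂ ℂ Prod.snd)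

end Ancilla

section BlockOp

variable {m n k : ℕ} {s : ℝ} {X : Matrix (Fin m × Fin n) (Fin m × Fin n) ℂ}

lemma blockComponent_zero_blockOp_mulVec (v : (Fin 2 × Fin m) × Fin n → ℂ) :
    blockComponent 0 (blockOp s X *ᵥ v) =
      (s : ℂ) • blockComponent 0 v + X *ᵥ blockComponent 1 v := by
  ext ⟨i, j⟩
  simp [blockComponent, blockOp, mulVec, dotProduct, Fintype.sum_prod_type, ite_and]

lemma blockComponent_one_blockOp_mulVec (v : (Fin 2 × Fin m) × Fin n → ℂ) :
    blockComponent 1 (blockOp s X *ᵥ v) =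
      (s : ℂ) • blockComponent 1 v + Xᴴ *ᵥ blockComponent 0 v := by
  ext ⟨i, j⟩
  simp [blockComponent, blockOp, mulVec, dotProduct, Fintype.sum_prod_type, ite_and, add_comm]

lemma re_vinner_blockOp_mulVec (v : (Fin 2 × Fin m) × Fin n → ℂ) :
    (vinner v (blockOp s X *ᵥ v)).re =
      s * (vinner v v).re + 2 * (vinner (blockComponent 0 v) (X *ᵥ blockComponent 1 v)).re := by
  have hsymm := re_vinner_conjTranspose_mulVec (blockComponent 0 v) (blockComponent 1 v) X
  rw [vinner_eq_sum_blockComponent, vinner_eq_sum_blockComponent v v, Fin.sum_univ_two,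
    Fin.sum_univ_two, blockComponent_zero_blockOp_mulVec, blockComponent_one_blockOp_mulVec]
  simp only [vinner, dotProduct_add, dotProduct_smul, smul_eq_mul, Complex.add_re,
    Complex.re_ofReal_mul] at hsymm ⊢
  linarith

lemma re_vinner_blockOp_mulVec_ancillaTensor (c : ℝ) (v : Fin m × Fin n → ℂ) :
    (vinner (ancillaTensor ![1, c] v) (blockOp s X *ᵥ ancillaTensor ![1, c] v)).re =
      s * ((1 + c ^ 2) * (vinner v v).re) + 2 * (c * (vinner v (X *ᵥ v)).re) := by
  rw [re_vinner_blockOp_mulVec, vinner_eq_sum_blockComponent, Fin.sum_univ_two]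
  simp only [blockComponent_ancillaTensor, vinner_smul_smul, Complex.add_re,
    Complex.re_ofReal_mul]
  simp [vinner, mulVec_smul, add_mul]

lemma norm_vinner_mulVec_le_of_kBlockPos_blockOp (hX : X.IsHermitian)
    (hpos : KBlockPos k (blockOp s X)) {v : Fin m × Fin n → ℂ} (hv : vinner v v = 1)
    (hrank : SchmidtRankLE k v) : ‖vinner v (X *ᵥ v)‖ ≤ s := by
  have htest (c : ℝ) : 0 ≤ s * (1 + c ^ 2) + 2 * (c * (vinner v (X *ᵥ v)).re) := by
    simpa only [re_vinner_blockOp_mulVec_ancillaTensor, hv, Complex.one_re, mul_one] using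
      hpos.re_vinner_mulVec_nonneg (hrank.ancillaTensor ![1, c])
  rw [norm_vinner_mulVec_self v hX, abs_le]
  constructor <;> linarith [htest 1, htest (-1)]

lemma kBlockPos_blockOp_prodRad (hX : X.IsHermitian) :
    KBlockPos k (blockOp (prodRad k X) X) := by
  intro v _ hrank
  have hadd : SchmidtRankLE k (blockComponent 0 v + blockComponent 1 v) := by
    simpa only [one_smul] using hrank.blockComponent_add_smul 0 1 1
  have hsub : SchmidtRankLE k (blockComponent 0 v - blockComponent 1 v) := by
    simpa only [neg_smul, one_smul, ← sub_eq_add_neg] using hrank.blockComponent_add_smul 0 1 (-1)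
  have hoffdiag := two_mul_abs_re_vinner_mulVec_le hX hadd hsub
  rw [re_vinner_blockOp_mulVec, vinner_eq_sum_blockComponent v v, Fin.sum_univ_two, Complex.add_re]
  linarith [neg_abs_le (vinner (blockComponent 0 v) (X *ᵥ blockComponent 1 v)).re]

end BlockOp

theorem prodRad_eq_inf_blockOp_general {m n k : ℕ} (hk : 1 ≤ k) (hm : 0 < m) (hn : 0 < n)
    {X : Matrix (Fin m × Fin n) (Fin m × Fin n) ℂ} (hX : X.IsHermitian) :
    IsLeast { s : ℝ | KBlockPos k (blockOp s X) } (prodRad k X) := by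
  have : Nonempty (Fin m) := Fin.pos_iff_nonempty.1 hm
  have : Nonempty (Fin n) := Fin.pos_iff_nonempty.1 hn
  exact ⟨kBlockPos_blockOp_prodRad hX, fun s hpos => prodRad_le hk fun v hv hrank =>
    norm_vinner_mulVec_le_of_kBlockPos_blockOp hX hpos hv hrank⟩

/-- for Hermitian `X`, `r_k^⊗(X)` is the infimum of those `s ∈ ℝ` such that the
block operator [[s·I, X],[Xᴴ, s·I]] is k-block positive with respect to the bipartition
ℂ^{2m} ⊗ ℂ^n. -/
theorem prodRad_eq_inf_blockOp {m n k : ℕ} (hk1 : 1 ≤ k) (hk : k ≤ min (2 * m) n)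
    (X : Matrix (Fin m × Fin n) (Fin m × Fin n) ℂ) (hX : X.IsHermitian) :
    prodRad k X = sInf { s : ℝ | KBlockPos k (blockOp s X) } :=
  (prodRad_eq_inf_blockOp_general hk1 (by lia) (by lia) hX).csInf_eq.symm

end Ent
end

section
/- Let ρ ∈ M_m ⊗ M_n be a density matrix and fix 1 ≤ k ≤ min(m,n). Then the following are equivalent: (a) SN(ρ) ≤ k; (b) ‖ρ‖_{γ,k} = 1; (c) R_k(ρ) = 1. -/
open scoped Kronecker ComplexOrder
open Matrix

namespace Ent

variable {ι κ : Type*} [Fintype ι] [Fintype κ]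

/-!
Let `B` be the convex hull of the operators `|v⟩⟨w|`, with `v` and `w` unit vectors of Schmidt rank
at most `k`. Since `Tr |v⟩⟨w| = ⟨w, v⟩`, Cauchy–Schwarz gives `Re Tr ≤ 1` on `B`, and its equality
case shows that the face `Tr = 1` of `B` is spanned by the projections `|v⟩⟨v|`: an operator of
trace one has Schmidt number at most `k` iff it belongs to `B`. Both norms are infima of real
numbers `r > 0` such that `r⁻¹ • X ∈ B`, so they are at least one when `X` has trace one. If such an
infimum equals one then `X ∈ B`, because `B` is compact: the Schmidt rank is the rank of the matrix
of coefficients, which is lower semicontinuous.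
-/

section ConvexHull

variable {𝕜 E : Type*} [Field 𝕜] [LinearOrder 𝕜] [IsStrictOrderedRing 𝕜]
  [AddCommGroup E] [Module 𝕜 E] {s : Set E} {x : E}

theorem mem_convexHull_iff_exists_fin_le_finrank_succ [FiniteDimensional 𝕜 E] :
    x ∈ convexHull 𝕜 s ↔ ∃ N ≤ Module.finrank 𝕜 E + 1, ∃ w ∈ stdSimplex 𝕜 (Fin N),
      ∃ z : Fin N → E, (∀ i, z i ∈ s) ∧ ∑ i, w i • z i = x := by
  constructor
  · intro hx
    obtain ⟨α, _, z, w, hzs, hz, hw_pos, hw_sum, rfl⟩ := eq_pos_convex_span_of_mem_convexHull hx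
    have hcard : Fintype.card α ≤ Module.finrank 𝕜 E + 1 :=
      hz.card_le_finrank_succ.trans (Nat.add_le_add_right (Submodule.finrank_le _) 1)
    let e := (Fintype.equivFin α).symm
    exact ⟨Fintype.card α, hcard, w ∘ e,
      ⟨fun i ↦ (hw_pos (e i)).le, (e.sum_comp w).trans hw_sum⟩, z ∘ e,
      fun i ↦ hzs ⟨e i, rfl⟩, e.sum_comp fun a ↦ w a • z a⟩
  · rintro ⟨N, -, w, ⟨hw_nonneg, hw_sum⟩, z, hz, rfl⟩
    exact mem_convexHull_of_exists_fintype w z hw_nonneg hw_sum hz rfl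

theorem mem_convexHull_inter_of_apply_le (f : E →ₗ[𝕜] 𝕜) {c : 𝕜} (hfs : ∀ y ∈ s, f y ≤ c)
    (hx : x ∈ convexHull 𝕜 s) (hfx : f x = c) : x ∈ convexHull 𝕜 (s ∩ {y | f y = c}) := by
  obtain ⟨α, _, z, w, hzs, -, hw_pos, hw_sum, rfl⟩ := eq_pos_convex_span_of_mem_convexHull hx
  have hz (i : α) : z i ∈ s := hzs ⟨i, rfl⟩
  have gap_nonneg (i : α) : 0 ≤ w i * (c - f (z i)) :=
    mul_nonneg (hw_pos i).le (sub_nonneg.2 (hfs _ (hz i)))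
  have sum_gap : ∑ i, w i * (c - f (z i)) = 0 := by
    simp only [map_sum, map_smul, smul_eq_mul] at hfx
    simp only [mul_sub, Finset.sum_sub_distrib, ← Finset.sum_mul, hw_sum, hfx, one_mul, sub_self]
  have gap_eq_zero := (Fintype.sum_eq_zero_iff_of_nonneg gap_nonneg).1 sum_gap
  refine mem_convexHull_of_exists_fintype w z (fun i ↦ (hw_pos i).le) hw_sum
    (fun i ↦ ⟨hz i, ?_⟩) rfl
  have := (mul_eq_zero.1 (congrFun gap_eq_zero i)).resolve_left (hw_pos i).ne'
  exact (sub_eq_zero.1 this).symm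

theorem sum_pos_and_inv_sum_smul_mem (hs : Convex 𝕜 s) {α : Type*} [Fintype α] {w : α → 𝕜}
    {z : α → E} (hw : ∀ i, 0 ≤ w i) (hz : ∀ i, z i ∈ s) (hne : ∑ i, w i • z i ≠ 0) :
    0 < ∑ i, w i ∧ (∑ i, w i)⁻¹ • ∑ i, w i • z i ∈ s := by
  have sum_pos : 0 < ∑ i, w i := by
    refine (Finset.sum_nonneg fun i _ ↦ hw i).lt_of_ne' fun h ↦ hne ?_
    have hw_zero := (Fintype.sum_eq_zero_iff_of_nonneg hw).1 h
    simp [hw_zero]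
  exact ⟨sum_pos, hs.centerMass_mem (fun i _ ↦ hw i) sum_pos fun i _ ↦ hz i⟩

end ConvexHull

theorem isCompact_convexHull {E : Type*} [AddCommGroup E] [Module ℝ E] [TopologicalSpace E]
    [ContinuousAdd E] [ContinuousSMul ℝ E] [FiniteDimensional ℝ E] {s : Set E} (hs : IsCompact s) :
    IsCompact (convexHull ℝ s) := by
  let combination (N : ℕ) (p : (Fin N → ℝ) × (Fin N → E)) : E := ∑ i, p.1 i • p.2 i
  have hull_eq : convexHull ℝ s = ⋃ N ∈ Set.Iic (Module.finrank ℝ E + 1),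
      combination N '' (stdSimplex ℝ (Fin N) ×ˢ Set.univ.pi fun _ ↦ s) := by
    ext x
    rw [mem_convexHull_iff_exists_fin_le_finrank_succ]
    simp [combination, and_assoc]
  rw [hull_eq]
  refine (Set.finite_Iic _).isCompact_biUnion fun N _ ↦ ?_
  refine ((isCompact_stdSimplex ℝ (Fin N)).prod (isCompact_univ_pi fun _ ↦ hs)).image ?_
  fun_prop

theorem mem_of_sInf_eq_one {E : Type*} [AddCommGroup E] [Module ℝ E] [TopologicalSpace E]
    [ContinuousSMul ℝ E] {C : Set E} (hC : IsClosed C) {S : Set ℝ} (hS : sInf S = 1) {x : E}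
    (hx : ∀ r ∈ S, r⁻¹ • x ∈ C) : x ∈ C := by
  -- The junk value of `sInf` on an empty or unbounded set is `0`, not `1`.
  have hne : S.Nonempty := by
    rw [Set.nonempty_iff_ne_empty]
    rintro rfl
    simp at hS
  have hbdd : BddBelow S := by
    by_contra h
    simp [Real.sInf_of_not_bddBelow h] at hS
  have : (nhdsWithin (1 : ℝ) S).NeBot :=
    mem_closure_iff_nhdsWithin_neBot.1 (hS ▸ csInf_mem_closure hne hbdd)
  have hlim : Filter.Tendsto (fun r : ℝ ↦ r⁻¹ • x) (nhdsWithin 1 S) (nhds x) := by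
    have hinv : Filter.Tendsto (fun r : ℝ ↦ r⁻¹) (nhdsWithin 1 S) (nhds 1) := by
      simpa using (continuousAt_inv₀ (one_ne_zero (α := ℝ))).tendsto.mono_left nhdsWithin_le_nhds
    simpa using hinv.smul_const x
  exact hC.mem_of_tendsto hlim (eventually_nhdsWithin_of_forall hx)

theorem matrix_rank_le_iff_exists_mul {K α β : Type*} [Field K] [Finite α] [Fintype β] {k : ℕ}
    {A : Matrix α β K} :
    A.rank ≤ k ↔ ∃ (B : Matrix α (Fin k) K) (C : Matrix (Fin k) β K), A = B * C := by
  classical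
  constructor
  · intro hA
    -- Factor `A` through its range, embedded in `K ^ k`.
    obtain ⟨e, he⟩ := (finrank_le_iff_exists_linearMap (R := K)
      (M := A.mulVecLin.range) (M' := Fin k → K)).1 (by simpa [Matrix.rank] using hA)
    obtain ⟨p, hp⟩ := e.exists_leftInverse_of_injective (LinearMap.ker_eq_bot.2 he)
    refine ⟨(A.mulVecLin.range.subtype ∘ₗ p).toMatrix',
      (e ∘ₗ A.mulVecLin.rangeRestrict).toMatrix', ?_⟩
    rw [← LinearMap.toMatrix'_comp, LinearMap.comp_assoc, ← LinearMap.comp_assoc _ e p, hp,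
      LinearMap.id_comp]
    exact (LinearMap.toMatrix'_toLin' A).symm
  · rintro ⟨B, C, rfl⟩
    exact (Matrix.rank_mul_le_left B C).trans (by simpa using B.rank_le_card_width)

theorem isClosed_setOf_matrix_rank_le {𝕜 α β : Type*} [NontriviallyNormedField 𝕜]
    [CompleteSpace 𝕜] [Finite α] [Fintype β] (k : ℕ) :
    IsClosed {A : Matrix α β 𝕜 | A.rank ≤ k} := by
  classical
  cases nonempty_fintype α
  let toCLM : Matrix α β 𝕜 →ₗ[𝕜] (β → 𝕜) →L[𝕜] (α → 𝕜) :=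
    LinearMap.toContinuousLinearMap.toLinearMap ∘ₗ Matrix.toLin'.toLinearMap
  have hopen := (isOpen_setOfPred_nat_le_rank (𝕜 := 𝕜) (E := β → 𝕜) (F := α → 𝕜) (k + 1)).preimage
    toCLM.continuous_of_finiteDimensional
  convert hopen.isClosed_compl using 1
  ext A
  have rank_toCLM : (toCLM A).toLinearMap.rank = A.rank := (Module.finrank_eq_rank 𝕜 _).symm
  simp only [Set.mem_ofPred_eq, Set.mem_compl_iff, Set.mem_preimage, rank_toCLM, Nat.cast_le,
    Nat.succ_le_iff, not_lt]

theorem ne_zero_of_trace_eq_one {α R : Type*} [Fintype α] [NonAssocSemiring R] [Nontrivial R]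
    {A : Matrix α α R} (hA : A.trace = 1) : A ≠ 0 := by
  rintro rfl
  simp at hA

theorem schmidtRankLE_iff_rank_le {α β : Type*} [Finite α] [Fintype β] {k : ℕ} {v : α × β → ℂ} :
    SchmidtRankLE k v ↔ (Matrix.of (Function.curry v)).rank ≤ k := by
  rw [matrix_rank_le_iff_exists_mul]
  constructor
  · rintro ⟨a, b, rfl⟩
    refine ⟨(Matrix.of a)ᵀ, Matrix.of b, ?_⟩
    ext i j
    simp [prodVec, Matrix.mul_apply]
  · rintro ⟨B, C, h⟩
    refine ⟨Bᵀ, C, ?_⟩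
    ext ⟨i, j⟩
    simpa [prodVec, Matrix.mul_apply] using congrFun₂ h i j

theorem isClosed_setOf_schmidtRankLE {α β : Type*} [Finite α] [Finite β] (k : ℕ) :
    IsClosed {v : α × β → ℂ | SchmidtRankLE k v} := by
  cases nonempty_fintype β
  simp only [schmidtRankLE_iff_rank_le]
  refine (isClosed_setOf_matrix_rank_le k).preimage
    (f := fun v : α × β → ℂ ↦ Matrix.of (Function.curry v)) ?_
  exact continuous_matrix fun i j ↦ continuous_apply (i, j)

theorem schmidtRankLE_smul {α β : Type*} {k : ℕ} {v : α × β → ℂ} (hv : SchmidtRankLE k v) (c : ℂ) :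
    SchmidtRankLE k (c • v) := by
  obtain ⟨a, b, rfl⟩ := hv
  refine ⟨fun i ↦ c • a i, b, ?_⟩
  ext p
  simp [prodVec, Finset.mul_sum, mul_assoc]

theorem vinner_eq_inner_s9 (v w : ι → ℂ) :
    vinner v w = inner ℂ (WithLp.toLp 2 v) (WithLp.toLp 2 w) := by
  rw [EuclideanSpace.inner_toLp_toLp, dotProduct_comm, vinner]

theorem vinner_self_eq_one_iff {v : ι → ℂ} : vinner v v = 1 ↔ ‖WithLp.toLp 2 v‖ = 1 := by
  rw [vinner_eq_inner_s9, inner_self_eq_norm_sq_to_K, ← RCLike.ofReal_pow,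
    ← RCLike.ofReal_one (K := ℂ), RCLike.ofReal_inj]
  exact pow_eq_one_iff_of_nonneg (norm_nonneg (WithLp.toLp 2 v)) two_ne_zero

theorem isCompact_setOf_vinner_self_eq_one : IsCompact {v : ι → ℂ | vinner v v = 1} := by
  have image_sphere : {v : ι → ℂ | vinner v v = 1} =
      WithLp.ofLp '' Metric.sphere (0 : EuclideanSpace ℂ ι) 1 := by
    ext v
    simp only [Set.mem_ofPred_eq, vinner_self_eq_one_iff]
    constructor
    · exact fun hv ↦ ⟨WithLp.toLp 2 v, by simpa using hv, rfl⟩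
    · rintro ⟨u, hu, rfl⟩
      simpa using hu
  rw [image_sphere]
  exact (isCompact_sphere _ _).image (PiLp.continuous_ofLp 2 _)

theorem trace_ketBra (v w : ι → ℂ) : (ketBra v w).trace = vinner w v := by
  rw [ketBra, Matrix.trace_vecMulVec, dotProduct_comm, vinner]

theorem re_trace_ketBra {v w : ι → ℂ} (hv : vinner v v = 1) (hw : vinner w w = 1) :
    (ketBra v w).trace.re = 1 - ‖WithLp.toLp 2 (w - v)‖ ^ 2 / 2 := by
  have := norm_sub_sq (𝕜 := ℂ) (WithLp.toLp 2 w) (WithLp.toLp 2 v)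
  rw [vinner_self_eq_one_iff.1 hv, vinner_self_eq_one_iff.1 hw, ← vinner_eq_inner_s9,
    ← trace_ketBra] at this
  rw [WithLp.toLp_sub, this, RCLike.re_to_complex]
  ring

theorem re_trace_ketBra_le_one {v w : ι → ℂ} (hv : vinner v v = 1) (hw : vinner w w = 1) :
    (ketBra v w).trace.re ≤ 1 := by
  rw [re_trace_ketBra hv hw]
  linarith [sq_nonneg ‖WithLp.toLp 2 (w - v)‖]

theorem eq_of_re_trace_ketBra_eq_one {v w : ι → ℂ} (hv : vinner v v = 1) (hw : vinner w w = 1)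
    (h : (ketBra v w).trace.re = 1) : w = v := by
  rw [re_trace_ketBra hv hw] at h
  have : ‖WithLp.toLp 2 (w - v)‖ = 0 := by
    rw [← sq_eq_zero_iff]
    linarith
  simpa [sub_eq_zero] using this

/-- The unit vectors of Schmidt rank at most `k`, from which both norms are built. -/
def schmidtSphere (ι κ : Type*) [Fintype ι] [Fintype κ] (k : ℕ) : Set (ι × κ → ℂ) :=
  {v | vinner v v = 1 ∧ SchmidtRankLE k v}

/-- The convex hull of the operators `|v⟩⟨w|` with `v` and `w` unit vectors of Schmidt rank at most
`k`, which plays the role of the unit ball of `‖·‖_{γ,k}`. -/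
def gammaBall (ι κ : Type*) [Fintype ι] [Fintype κ] (k : ℕ) : Set (Matrix (ι × κ) (ι × κ) ℂ) :=
  convexHull ℝ (Set.image2 ketBra (schmidtSphere ι κ k) (schmidtSphere ι κ k))

variable {k : ℕ} {X : Matrix (ι × κ) (ι × κ) ℂ}

theorem smul_mem_schmidtSphere {v : ι × κ → ℂ} (hv : v ∈ schmidtSphere ι κ k) {c : ℂ}
    (hc : ‖c‖ = 1) : c • v ∈ schmidtSphere ι κ k := by
  refine ⟨?_, schmidtRankLE_smul hv.2 c⟩
  rw [vinner_self_eq_one_iff, WithLp.toLp_smul, norm_smul, hc, one_mul]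
  exact vinner_self_eq_one_iff.1 hv.1

theorem isCompact_schmidtSphere (k : ℕ) : IsCompact (schmidtSphere ι κ k) :=
  isCompact_setOf_vinner_self_eq_one.inter_right (isClosed_setOf_schmidtRankLE k)

theorem isCompact_gammaBall (k : ℕ) : IsCompact (gammaBall ι κ k) := by
  refine isCompact_convexHull ?_
  rw [← Set.image_uncurry_prod]
  refine ((isCompact_schmidtSphere k).prod (isCompact_schmidtSphere k)).image ?_
  unfold ketBra
  fun_prop

theorem convex_gammaBall (k : ℕ) : Convex ℝ (gammaBall ι κ k) :=
  convex_convexHull ℝ _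

theorem ketBra_mem_gammaBall {v w : ι × κ → ℂ} (hv : v ∈ schmidtSphere ι κ k)
    (hw : w ∈ schmidtSphere ι κ k) : ketBra v w ∈ gammaBall ι κ k :=
  subset_convexHull ℝ _ ⟨v, hv, w, hw, rfl⟩

theorem smul_mem_gammaBall (hX : X ∈ gammaBall ι κ k) {c : ℂ} (hc : ‖c‖ = 1) :
    c • X ∈ gammaBall ι κ k := by
  refine convexHull_min ?_
    ((convex_gammaBall k).linear_preimage (DistribSMul.toLinearMap ℝ _ c)) hX
  rintro _ ⟨v, hv, w, hw, rfl⟩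
  have phase_ketBra : c • ketBra v w = ketBra (c • v) w := by
    simp only [ketBra, Matrix.smul_vecMulVec]
  rw [Set.mem_preimage, DistribSMul.toLinearMap_apply, phase_ketBra]
  exact ketBra_mem_gammaBall (smul_mem_schmidtSphere hv hc) hw

/-- The real part of the trace, as a real linear functional: it exposes the face of `gammaBall`
formed by the operators of Schmidt number at most `k`. -/
noncomputable def reTrace (α : Type*) [Fintype α] : Matrix α α ℂ →ₗ[ℝ] ℝ :=
  Complex.reLm ∘ₗ Matrix.traceLinearMap α ℝ ℂ

theorem reTrace_le_one_of_mem_gammaBall (hX : X ∈ gammaBall ι κ k) : reTrace _ X ≤ 1 := by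
  refine convexHull_min ?_ (convex_halfSpace_le (reTrace _).isLinear 1) hX
  rintro _ ⟨v, hv, w, hw, rfl⟩
  exact re_trace_ketBra_le_one hv.1 hw.1

theorem schmidtNumLE_iff_mem_convexHull : SchmidtNumLE k X ↔
    X ∈ convexHull ℝ ((fun v ↦ ketBra v v) '' schmidtSphere ι κ k) := by
  constructor
  · rintro ⟨N, p, v, hv, hp, rfl⟩
    exact mem_convexHull_of_exists_fintype p _ (fun i ↦ (hv i).1) hp
      (fun i ↦ ⟨v i, (hv i).2, rfl⟩) rfl
  · rw [mem_convexHull_iff_exists_fin_le_finrank_succ]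
    rintro ⟨N, -, p, ⟨hp_nonneg, hp_sum⟩, z, hz, rfl⟩
    choose v hv hvz using hz
    exact ⟨N, p, v, fun i ↦ ⟨hp_nonneg i, hv i⟩, hp_sum, by simp only [hvz]⟩

theorem schmidtNumLE_iff_mem_gammaBall (hX : X.trace = 1) :
    SchmidtNumLE k X ↔ X ∈ gammaBall ι κ k := by
  rw [schmidtNumLE_iff_mem_convexHull]
  constructor
  · refine fun h ↦ convexHull_mono ?_ h
    rintro _ ⟨v, hv, rfl⟩
    exact ⟨v, hv, v, hv, rfl⟩
  · intro h
    have hface := mem_convexHull_inter_of_apply_le (reTrace _)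
      (fun Y hY ↦ reTrace_le_one_of_mem_gammaBall (subset_convexHull ℝ _ hY)) h
      (congrArg Complex.re hX)
    refine convexHull_mono ?_ hface
    rintro _ ⟨⟨v, hv, w, hw, rfl⟩, htrace⟩
    obtain rfl := eq_of_re_trace_ketBra_eq_one hv.1 hw.1 htrace
    exact ⟨w, hw, rfl⟩

theorem isDensity_of_schmidtNumLE (hX : SchmidtNumLE k X) : IsDensity X := by
  obtain ⟨N, p, v, hv, hp, rfl⟩ := hX
  constructor
  · exact Matrix.posSemidef_sum _ fun i _ ↦
      (Matrix.posSemidef_vecMulVec_self_star (v i)).smul (hv i).1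
  · simp only [Matrix.trace_sum, Matrix.trace_smul, trace_ketBra, (hv _).2.1]
    simpa using congrArg Complex.ofReal hp

theorem schmidtNumLE_iff_sInf_eq_one (hX : X.trace = 1) {S : Set ℝ}
    (hone : SchmidtNumLE k X → 1 ∈ S) (hS : ∀ r ∈ S, 0 < r ∧ r⁻¹ • X ∈ gammaBall ι κ k) :
    SchmidtNumLE k X ↔ sInf S = 1 := by
  constructor
  · refine fun h ↦ IsLeast.csInf_eq ⟨hone h, fun r hr ↦ ?_⟩
    obtain ⟨r_pos, hmem⟩ := hS r hr
    have htrace : r⁻¹ • reTrace _ X ≤ 1 := by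
      rw [← map_smul]
      exact reTrace_le_one_of_mem_gammaBall hmem
    have hXone : reTrace _ X = 1 := congrArg Complex.re hX
    rw [hXone, smul_eq_mul, mul_one] at htrace
    exact (inv_le_one₀ r_pos).1 htrace
  · intro h
    rw [schmidtNumLE_iff_mem_gammaBall hX]
    exact mem_of_sInf_eq_one (isCompact_gammaBall k).isClosed h fun r hr ↦ (hS r hr).2

theorem inv_smul_mem_gammaBall_of_eq_sum_ketBra (hX : X ≠ 0) {N : ℕ} {c : Fin N → ℂ}
    {v w : Fin N → ι × κ → ℂ} (hv : ∀ i, v i ∈ schmidtSphere ι κ k)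
    (hw : ∀ i, w i ∈ schmidtSphere ι κ k) (hsum : X = ∑ i, c i • ketBra (v i) (w i)) :
    0 < ∑ i, ‖c i‖ ∧ (∑ i, ‖c i‖)⁻¹ • X ∈ gammaBall ι κ k := by
  choose u hu hcu using fun i ↦ Complex.exists_norm_mul_eq_self (c i)
  have hpolar : X = ∑ i, ‖c i‖ • u i • ketBra (v i) (w i) := by
    simp only [hsum, ← Complex.coe_smul, smul_smul, mul_comm _ (u _), hcu]
  rw [hpolar] at hX ⊢
  exact sum_pos_and_inv_sum_smul_mem (convex_gammaBall k) (fun i ↦ norm_nonneg (c i))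
    (fun i ↦ smul_mem_gammaBall (ketBra_mem_gammaBall (hv i) (hw i)) (hu i)) hX

theorem inv_smul_mem_gammaBall_of_eq_sub (hX : X ≠ 0) {c₁ c₂ : ℝ}
    {ρ₁ ρ₂ : Matrix (ι × κ) (ι × κ) ℂ} (hc₁ : 0 ≤ c₁) (hc₂ : 0 ≤ c₂) (hρ₁ : SchmidtNumLE k ρ₁)
    (hρ₂ : SchmidtNumLE k ρ₂) (hsub : X = c₁ • ρ₁ - c₂ • ρ₂) :
    0 < c₁ + c₂ ∧ (c₁ + c₂)⁻¹ • X ∈ gammaBall ι κ k := by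
  have hmem₁ : ρ₁ ∈ gammaBall ι κ k :=
    (schmidtNumLE_iff_mem_gammaBall (isDensity_of_schmidtNumLE hρ₁).2).1 hρ₁
  have hmem₂ : ρ₂ ∈ gammaBall ι κ k :=
    (schmidtNumLE_iff_mem_gammaBall (isDensity_of_schmidtNumLE hρ₂).2).1 hρ₂
  have hneg : -ρ₂ ∈ gammaBall ι κ k := by
    simpa using smul_mem_gammaBall hmem₂ (c := -1) (by simp)
  have hsum : X = ∑ i, ![c₁, c₂] i • ![ρ₁, -ρ₂] i := by
    simp [hsub, sub_eq_add_neg]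
  rw [hsum] at hX ⊢
  simpa using sum_pos_and_inv_sum_smul_mem (convex_gammaBall k)
    (by simp [Fin.forall_fin_two, hc₁, hc₂]) (by simp [Fin.forall_fin_two, hmem₁, hneg]) hX

theorem schmidtNumLE_iff_gammaNorm_eq_one (hX : X.trace = 1) :
    SchmidtNumLE k X ↔ gammaNorm k X = 1 := by
  refine schmidtNumLE_iff_sInf_eq_one hX ?_ ?_
  · rintro ⟨N, p, v, hv, hp, hsum⟩
    refine ⟨N, fun i ↦ (p i : ℂ), v, v,
      fun i ↦ ⟨(hv i).2.1, (hv i).2.1, (hv i).2.2, (hv i).2.2⟩, ?_, ?_⟩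
    · simpa only [Complex.coe_smul] using hsum
    · simp only [Complex.norm_of_nonneg (hv _).1, hp]
  · rintro _ ⟨N, c, v, w, hvw, hsum, rfl⟩
    exact inv_smul_mem_gammaBall_of_eq_sum_ketBra (ne_zero_of_trace_eq_one hX)
      (fun i ↦ ⟨(hvw i).1, (hvw i).2.2.1⟩) (fun i ↦ ⟨(hvw i).2.1, (hvw i).2.2.2⟩) hsum

theorem schmidtNumLE_iff_Rk_eq_one (hX : X.trace = 1) : SchmidtNumLE k X ↔ Rk k X = 1 := by
  refine schmidtNumLE_iff_sInf_eq_one hX ?_ ?_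
  · intro h
    have hdensity := isDensity_of_schmidtNumLE h
    exact ⟨1, 0, X, X, zero_le_one, le_rfl, hdensity, hdensity, h, h, by simp, by simp⟩
  · rintro _ ⟨c₁, c₂, ρ₁, ρ₂, hc₁, hc₂, -, -, hρ₁, hρ₂, hsub, rfl⟩
    exact inv_smul_mem_gammaBall_of_eq_sub (ne_zero_of_trace_eq_one hX) hc₁ hc₂ hρ₁ hρ₂ hsub

theorem schmidtNum_le_iff_gammaNorm_eq_one_general (hX : X.trace = 1) :
    (SchmidtNumLE k X ↔ gammaNorm k X = 1) ∧ (SchmidtNumLE k X ↔ Rk k X = 1) :=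
  ⟨schmidtNumLE_iff_gammaNorm_eq_one hX, schmidtNumLE_iff_Rk_eq_one hX⟩

/-- for a density matrix `ρ`, the following are equivalent: (a) SN(ρ) ≤ k;
(b) ‖ρ‖_{γ,k} = 1; (c) R_k(ρ) = 1. -/
theorem schmidtNum_le_iff_gammaNorm_eq_one {m n k : ℕ} (hk1 : 1 ≤ k) (hk : k ≤ min m n)
    (ρ : Matrix (Fin m × Fin n) (Fin m × Fin n) ℂ) (hρ : IsDensity ρ) :
    (SchmidtNumLE k ρ ↔ gammaNorm k ρ = 1) ∧ (SchmidtNumLE k ρ ↔ Rk k ρ = 1) :=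
  schmidtNum_le_iff_gammaNorm_eq_one_general hρ.2

end Ent
end
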